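/- Let m ≥ 4 and let e be an integer with 1 ≤ e ≤ ⌊m/2⌋ such that m/gcd(m,e) is odd, and set h = (m − gcd(m,e))/2. Then the dual code C̄_E^⊥ has dimension 2m + 1 over F_2 and minimum nonzero Hamming weight 2^{m−1} − 2^{m−1−h}, with weight distribution: the number of codewords of weight 0 is 1; of weight 2^{m−1} − 2^{m−1−h} is (2^m − 1)·2^{2h}; of weight 2^{m−1} is (2^m − 1)(2^{m+1} − 2^{2h+1} + 2); of weight 2^{m−1} + 2^{m−1−h} is (2^m − 1)·2^{2h}; of weight 2^m is 1; and there are no codewords of any other weight. Moreover, the extended code C̄_E has length 2^m, dimension 2^m − 1 − 2m, and minimum nonzero Hamming weight 4 if gcd(e,m) > 1 and 6 if gcd(e,m) = 1. -/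

import Mathlib

open Polynomial Finset

/-- The polynomial `c₀ + c₁x + ⋯ + c_{n−1}x^{n−1}` associated to a vector. -/
noncomputable def codePoly {n : ℕ} (c : Fin n → ZMod 2) : Polynomial (ZMod 2) :=
  ∑ i : Fin n, Polynomial.C (c i) * Polynomial.X ^ (i : ℕ)

/-- The generator polynomial `g_E(x) = M_α(x) · M_{α^{1+2^e}}(x)`. -/
noncomputable def gE (m e : ℕ) (α : GaloisField 2 m) : Polynomial (ZMod 2) :=
  minpoly (ZMod 2) α * minpoly (ZMod 2) (α ^ (1 + 2 ^ e))

/-- The binary cyclic code `C_E` of length `2^m − 1` with generator polynomial `g_E`. -/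
def CE (m e : ℕ) (α : GaloisField 2 m) : Set (Fin (2 ^ m - 1) → ZMod 2) :=
  {c | gE m e α ∣ codePoly c}

/-- The extended code `C̄_E ⊆ F_2^{2^m}`: the first `2^m − 1` coordinates form a codeword
of `C_E` and all `2^m` coordinates sum to zero. -/
def CEbar (m e : ℕ) (α : GaloisField 2 m) : Set (Fin (2 ^ m) → ZMod 2) :=
  {c | (fun i : Fin (2 ^ m - 1) => c (Fin.castLE (Nat.sub_le _ _) i)) ∈ CE m e α ∧
       ∑ i, c i = 0}

/-- The dual of a set of vectors over a commutative ring, as a submodule. -/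
def dualCode {n : ℕ} {F : Type*} [CommRing F] (C : Set (Fin n → F)) :
    Submodule F (Fin n → F) where
  carrier := {y | ∀ c ∈ C, ∑ i, y i * c i = 0}
  add_mem' := by
    intro a b ha hb c hc
    have h1 := ha c hc
    have h2 := hb c hc
    simp only [Pi.add_apply, add_mul, Finset.sum_add_distrib, h1, h2, add_zero]
  zero_mem' := by intro c hc; simp
  smul_mem' := by
    intro r a ha c hc
    have h1 := ha c hc
    simp only [Pi.smul_apply, smul_eq_mul, mul_assoc, ← Finset.mul_sum, h1, mul_zero]

lemma codePoly_add {n : ℕ} (a b : Fin n → ZMod 2) :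
    codePoly (fun i => a i + b i) = codePoly a + codePoly b := by
  simp [codePoly, Finset.sum_add_distrib, add_mul]

lemma codePoly_smul {n : ℕ} (r : ZMod 2) (a : Fin n → ZMod 2) :
    codePoly (fun i => r * a i) = Polynomial.C r * codePoly a := by
  simp [codePoly, Finset.mul_sum, mul_assoc]

/-- The extended code `C̄_E`, as an `F_2`-submodule of `F_2^{2^m}`. -/
noncomputable def CEbarSub (m e : ℕ) (α : GaloisField 2 m) :
    Submodule (ZMod 2) (Fin (2 ^ m) → ZMod 2) where
  carrier := CEbar m e α
  add_mem' := by
    rintro a b ⟨ha1, ha2⟩ ⟨hb1, hb2⟩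
    refine ⟨?_, ?_⟩
    · show gE m e α ∣
        codePoly (fun i : Fin (2 ^ m - 1) => (a + b) (Fin.castLE (Nat.sub_le _ _) i))
      have h : (fun i : Fin (2 ^ m - 1) => (a + b) (Fin.castLE (Nat.sub_le _ _) i)) =
          (fun i : Fin (2 ^ m - 1) =>
            a (Fin.castLE (Nat.sub_le _ _) i) + b (Fin.castLE (Nat.sub_le _ _) i)) := rfl
      rw [h, codePoly_add]
      exact dvd_add ha1 hb1
    · simp only [Pi.add_apply, Finset.sum_add_distrib, ha2, hb2, add_zero]
  zero_mem' := by
    refine ⟨?_, by simp⟩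
    show gE m e α ∣
      codePoly (fun i : Fin (2 ^ m - 1) => (0 : Fin (2 ^ m) → ZMod 2) (Fin.castLE (Nat.sub_le _ _) i))
    have h : (fun i : Fin (2 ^ m - 1) => (0 : Fin (2 ^ m) → ZMod 2) (Fin.castLE (Nat.sub_le _ _) i)) =
        (fun _ : Fin (2 ^ m - 1) => (0 : ZMod 2)) := rfl
    rw [h]
    simp [codePoly]
  smul_mem' := by
    rintro r a ⟨ha1, ha2⟩
    refine ⟨?_, ?_⟩
    · show gE m e α ∣
        codePoly (fun i : Fin (2 ^ m - 1) => (r • a) (Fin.castLE (Nat.sub_le _ _) i))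
      have h : (fun i : Fin (2 ^ m - 1) => (r • a) (Fin.castLE (Nat.sub_le _ _) i)) =
          (fun i : Fin (2 ^ m - 1) => r * a (Fin.castLE (Nat.sub_le _ _) i)) := rfl
      rw [h, codePoly_smul]
      exact Dvd.dvd.mul_left ha1 _
    · simp only [Pi.smul_apply, smul_eq_mul, ← Finset.mul_sum, ha2, mul_zero]

/-!
Indexing the coordinates by `𝔽_{2^m}` turns `C̄_E` into the code with parity-check columns
`(x, x ^ (1 + 2 ^ e), 1)`, so its dual consists of the words `(Tr (a x ^ (1 + 2 ^ e) + b x) + c)ₓ`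
and the weight of such a word is governed by a Walsh coefficient of the quadratic form
`x ↦ Tr (a x ^ (1 + 2 ^ e))`. As `m / gcd m e` is odd, `1 + 2 ^ e` is prime to `2 ^ m - 1`, and
rescaling `x` reduces to `a = 1`. There the radical of the polar form is the fixed field of
`x ↦ x ^ 2 ^ (2 * e)`, which has `2 ^ gcd m e` elements, so every Walsh coefficient is `0` or
`± 2 ^ (m - h)`. Parseval's identity determines how often it is nonzero, and the constant `c`
balances the two signs.

Codewords of `C̄_E` are sets of field elements whose columns sum to zero; they have even size, and
those of size four are the affine planes `x + ⟨u, v⟩` over `𝔽₂` with `u / v` fixed by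
`x ↦ x ^ 2 ^ e`. When no such plane exists, a pigeonhole argument on three-element sets yields a
codeword of weight six.
-/

section FiniteField

lemma gcd_two_mul_of_odd_div_gcd {m e : ℕ} (hodd : Odd (m / Nat.gcd m e)) :
    Nat.gcd (2 * e) m = Nat.gcd m e := by
  have hd : 0 < Nat.gcd m e := Nat.pos_of_ne_zero fun h0 => by simp [h0] at hodd
  obtain ⟨m', e', hcop, hm', he'⟩ := Nat.exists_coprime m e
  rw [Nat.div_eq_of_eq_mul_left hd hm'] at hodd
  calc Nat.gcd (2 * e) m = Nat.gcd (2 * e' * Nat.gcd m e) (m' * Nat.gcd m e) := by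
        rw [mul_assoc, ← he', ← hm']
    _ = Nat.gcd (2 * e') m' * Nat.gcd m e := Nat.gcd_mul_right _ _ _
    _ = Nat.gcd m e := by
        rw [Nat.Coprime.mul_left (Nat.coprime_two_left.2 hodd) hcop.symm, one_mul]

lemma coprime_two_pow_sub_one_one_add_two_pow {m e : ℕ} (hodd : Odd (m / Nat.gcd m e)) :
    Nat.Coprime (2 ^ m - 1) (1 + 2 ^ e) := by
  have hm : m ≠ 0 := by rintro rfl; simp at hodd
  set g := Nat.gcd (2 ^ m - 1) (1 + 2 ^ e)
  have hfac : 2 ^ (2 * e) - 1 = (1 + 2 ^ e) * (2 ^ e - 1) := by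
    rw [mul_comm 2 e, pow_mul, add_comm, ← Nat.sq_sub_sq, one_pow]
  have hgcd : g ∣ 2 ^ Nat.gcd m e - 1 := by
    rw [← gcd_two_mul_of_odd_div_gcd hodd, ← Nat.pow_sub_one_gcd_pow_sub_one, hfac]
    exact Nat.dvd_gcd ((Nat.gcd_dvd_right _ _).mul_right _) (Nat.gcd_dvd_left _ _)
  have hsub : g ∣ 2 ^ e - 1 :=
    hgcd.trans (Nat.pow_sub_one_dvd_pow_sub_one 2 (Nat.gcd_dvd_right m e))
  have htwo : g ∣ 2 := by
    have := Nat.dvd_sub (Nat.gcd_dvd_right (2 ^ m - 1) (1 + 2 ^ e)) hsub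
    rwa [show 1 + 2 ^ e - (2 ^ e - 1) = 2 by have := Nat.one_le_two_pow (n := e); omega] at this
  have hg_odd : Odd g :=
    (Nat.Even.sub_odd Nat.one_le_two_pow (even_two.pow_of_ne_zero hm) odd_one).of_dvd_nat
      (Nat.gcd_dvd_left _ _)
  exact Nat.dvd_one.1 (hg_odd.coprime_two_right.dvd_of_dvd_mul_right (by simpa using htwo))

lemma charP_two_of_algebra_zmod (F : Type*) [Field F] [Algebra (ZMod 2) F] : CharP F 2 :=
  (Algebra.charP_iff (ZMod 2) F 2).1 inferInstance

variable {F : Type*} [Field F] [Fintype F]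

lemma card_filter_pow_succ_eq_self [DecidableEq F] (n : ℕ) :
    #{x : F | x ^ (n + 1) = x} = Nat.gcd (Fintype.card F - 1) n + 1 := by
  have hset : ({x : F | x ^ (n + 1) = x} : Finset F) =
      insert 0 (({u : Fˣ | u ^ n = 1} : Finset Fˣ).map ⟨Units.val, Units.val_injective⟩) := by
    ext x
    rcases eq_or_ne x 0 with rfl | hx
    · simp
    · lift x to Fˣ using hx.isUnit
      simp [pow_succ, ← Units.val_pow_eq_pow_val, -Units.val_mul]
  rw [hset, card_insert_of_notMem (by simp), card_map, ← Fintype.card_units,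
    ← Nat.card_eq_fintype_card, ← IsCyclic.card_powMonoidHom_ker, ← Fintype.card_subtype,
    ← Nat.card_eq_fintype_card]
  rfl

lemma card_filter_pow_pow_eq_self [DecidableEq F] {p m : ℕ} (hcard : Fintype.card F = p ^ m)
    (k : ℕ) : #{x : F | x ^ p ^ k = x} = p ^ Nat.gcd m k := by
  have hp : 0 < p := Nat.pos_of_ne_zero <| by
    rintro rfl
    have := Fintype.one_lt_card (α := F)
    have := zero_pow_le_one (M₀ := ℕ) m
    omega
  obtain ⟨n, hn⟩ : ∃ n, p ^ k = n + 1 := Nat.exists_eq_succ_of_ne_zero (pow_pos hp k).ne'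
  rw [hn, card_filter_pow_succ_eq_self, hcard, show n = p ^ k - 1 by omega,
    Nat.pow_sub_one_gcd_pow_sub_one, Nat.sub_add_cancel (pow_pos hp _)]

lemma exists_ne_zero_pow_eq_of_coprime {n : ℕ} (hn : (Fintype.card F - 1).Coprime n) {a : F}
    (ha : a ≠ 0) : ∃ s : F, s ≠ 0 ∧ s ^ n = a := by
  classical
  lift a to Fˣ using ha.isUnit
  rw [← Fintype.card_units, ← Nat.card_eq_fintype_card] at hn
  obtain ⟨s, hs⟩ := (powCoprime hn).surjective a
  exact ⟨s, s.ne_zero, by simp [← hs, powCoprime]⟩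

lemma pow_one_add_two_pow_second_difference {R : Type*} [CommRing R] [CharP R 2]
    (e : ℕ) (x u v : R) :
    x ^ (1 + 2 ^ e) + (x + u) ^ (1 + 2 ^ e) + (x + v) ^ (1 + 2 ^ e) + (x + u + v) ^ (1 + 2 ^ e) =
      u * v ^ 2 ^ e + v * u ^ 2 ^ e := by
  simp only [pow_add _ 1, pow_one, add_pow_char_pow]
  linear_combination (2 * x * x ^ 2 ^ e + x * u ^ 2 ^ e + u * x ^ 2 ^ e + u * u ^ 2 ^ e +
    x * v ^ 2 ^ e + v * x ^ 2 ^ e + v * v ^ 2 ^ e) * (CharTwo.two_eq_zero : (2 : R) = 0)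

end FiniteField

section Frobenius

variable {F : Type*} [Field F] [Algebra (ZMod 2) F] [Algebra.IsAlgebraic (ZMod 2) F]

variable (F) in
/-- The automorphism `x ↦ x ^ 2 ^ e` of an algebraic extension of `𝔽₂`. -/
noncomputable def frobeniusPow (e : ℕ) : F ≃ₐ[ZMod 2] F :=
  FiniteField.frobeniusAlgEquivOfAlgebraic (ZMod 2) F ^ e

@[simp]
lemma frobeniusPow_apply (e : ℕ) (x : F) : frobeniusPow F e x = x ^ 2 ^ e := by
  rw [frobeniusPow, AlgEquiv.coe_pow, FiniteField.coe_frobeniusAlgEquivOfAlgebraic_iterate,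
    ZMod.card]

lemma trace_pow_two_pow (e : ℕ) (x : F) :
    Algebra.trace (ZMod 2) F (x ^ 2 ^ e) = Algebra.trace (ZMod 2) F x := by
  rw [← frobeniusPow_apply, Algebra.trace_eq_of_algEquiv]

end Frobenius

section Walsh

/-- The sign character `c ↦ (-1) ^ c` of `𝔽₂`. -/
def signChar : AddChar (ZMod 2) ℤ :=
  AddChar.zmodChar 2 (neg_one_sq (R := ℤ))

@[simp]
lemma signChar_one : signChar 1 = -1 := rfl

lemma signChar_eq_one_iff {c : ZMod 2} : signChar c = 1 ↔ c = 0 := by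
  revert c; decide

lemma signChar_eq_ite (c : ZMod 2) : signChar c = if c = 0 then 1 else -1 := by
  revert c; decide

lemma signChar_mul_self (c : ZMod 2) : signChar c * signChar c = 1 := by
  revert c; decide

variable {F : Type*} [Field F] [Algebra (ZMod 2) F]

variable (F) in
/-- The canonical additive character `x ↦ (-1) ^ Tr x` of a finite field of characteristic two. -/
noncomputable def traceChar : AddChar F ℤ :=
  signChar.compAddMonoidHom (Algebra.trace (ZMod 2) F).toAddMonoidHom

lemma traceChar_apply (x : F) : traceChar F x = signChar (Algebra.trace (ZMod 2) F x) := rfl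

variable (F) in
lemma isPrimitive_traceChar [Finite F] : (traceChar F).IsPrimitive := by
  obtain ⟨x, hx⟩ := Algebra.trace_surjective (ZMod 2) F 1
  exact AddChar.IsPrimitive.of_ne_one <| AddChar.ne_one_iff.2 ⟨x, by simp [traceChar_apply, hx]⟩

variable [Fintype F]

/-- The Walsh transform `b ↦ ∑ₓ (-1) ^ (f x + Tr (b x))` of a Boolean function `f` on `F`. -/
noncomputable def walshTransform (f : F → ZMod 2) (b : F) : ℤ :=
  ∑ x, signChar (f x + Algebra.trace (ZMod 2) F (b * x))

lemma walshTransform_zero_left [DecidableEq F] (b : F) :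
    walshTransform 0 b = if b = 0 then (Fintype.card F : ℤ) else 0 := by
  simp only [walshTransform, Pi.zero_apply, zero_add, ← traceChar_apply, mul_comm b]
  exact_mod_cast AddChar.sum_mulShift b (isPrimitive_traceChar F)

lemma sum_walshTransform_sq (f : F → ZMod 2) :
    ∑ b, walshTransform f b ^ 2 = (Fintype.card F : ℤ) ^ 2 := by
  classical
  have := charP_two_of_algebra_zmod F
  have hsq : ∀ b, walshTransform f b ^ 2 =
      ∑ x, ∑ y, signChar (f x) * signChar (f y) * traceChar F (b * (x + y)) := fun b => by
    simp only [walshTransform, sq, Finset.sum_mul_sum, mul_add, AddChar.map_add_eq_mul,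
      traceChar_apply]
    exact sum_congr rfl fun x _ => sum_congr rfl fun y _ => by ring
  calc ∑ b, walshTransform f b ^ 2
      = ∑ x, ∑ y, signChar (f x) * signChar (f y) * ∑ b, traceChar F (b * (x + y)) := by
        simp only [hsq, mul_sum]
        rw [sum_comm]
        exact sum_congr rfl fun x _ => sum_comm
    _ = ∑ x, ∑ y, if x = y then (Fintype.card F : ℤ) else 0 := by
        refine sum_congr rfl fun x _ => sum_congr rfl fun y _ => ?_
        rw [AddChar.sum_mulShift _ (isPrimitive_traceChar F)]
        simp only [CharTwo.add_eq_zero]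
        split_ifs with hxy
        · rw [hxy, signChar_mul_self, one_mul]
        · simp
    _ = (Fintype.card F : ℤ) ^ 2 := by simp [sq]

/-- A Boolean function `f` is plateaued with amplitude `A` if its Walsh transform only takes the
values `0`, `A` and `-A`. -/
def IsPlateaued (f : F → ZMod 2) (A : ℤ) : Prop :=
  ∀ b, walshTransform f b = 0 ∨ walshTransform f b = A ∨ walshTransform f b = -A

lemma IsPlateaued.card_support_mul_sq {f : F → ZMod 2} {A : ℤ} (hf : IsPlateaued f A) :
    (#{b | walshTransform f b ≠ 0} : ℤ) * A ^ 2 = (Fintype.card F : ℤ) ^ 2 := by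
  rw [← sum_walshTransform_sq f, ← nsmul_eq_mul, ← sum_const, sum_filter]
  refine sum_congr rfl fun b _ => ?_
  rcases hf b with h | h | h <;> by_cases hA : A = 0 <;> simp [h, hA]

lemma sum_signChar_linearMap {V : Type*} [AddCommGroup V] [Module (ZMod 2) V] [Fintype V]
    (φ : V →ₗ[ZMod 2] ZMod 2) [Decidable (φ = 0)] :
    ∑ x, signChar (φ x) = if φ = 0 then (Fintype.card V : ℤ) else 0 := by
  classical
  have hχ : signChar.compAddMonoidHom φ.toAddMonoidHom = 0 ↔ φ = 0 := by
    simp [DFunLike.ext_iff, signChar_eq_one_iff]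
  simp only [← hχ, ← AddChar.sum_eq_ite]
  rfl

/-- The substitution `z = y + x` factors the square as `∑ y, (-1) ^ q y * ∑ x, (-1) ^ B y x`; the
inner sum is supported on the radical of `B`, where `q` is additive. -/
lemma sum_signChar_sq_eq_zero_or {V : Type*} [AddCommGroup V] [Module (ZMod 2) V] [Fintype V]
    {q : V → ZMod 2} {B : LinearMap.BilinForm (ZMod 2) V}
    (hq : ∀ x y, q (x + y) = q x + q y + B x y) :
    (∑ x, signChar (q x)) ^ 2 = 0 ∨
      (∑ x, signChar (q x)) ^ 2 = Fintype.card V * Nat.card (LinearMap.ker B) := by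
  classical
  have hsq : (∑ x, signChar (q x)) ^ 2 =
      Fintype.card V * ∑ y : LinearMap.ker B, signChar (q y) := by
    calc (∑ x, signChar (q x)) ^ 2
        = ∑ x, ∑ y, signChar (q x) * signChar (q (y + x)) := by
          rw [sq, Finset.sum_mul_sum]
          exact sum_congr rfl fun x _ => (Equiv.sum_comp (Equiv.addRight x) _).symm
      _ = ∑ y, signChar (q y) * ∑ x, signChar (B y x) := by
          rw [sum_comm]
          refine sum_congr rfl fun y _ => ?_
          rw [mul_sum]
          refine sum_congr rfl fun x _ => ?_
          rw [hq, AddChar.map_add_eq_mul, AddChar.map_add_eq_mul]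
          linear_combination signChar (q y) * signChar (B y x) * signChar_mul_self (q x)
      _ = Fintype.card V * ∑ y : LinearMap.ker B, signChar (q y) := by
          simp only [sum_signChar_linearMap, mul_ite, mul_zero]
          rw [← sum_filter, ← sum_mul, mul_comm]
          congr 1
          exact sum_subtype _ (by simp) _
  let χ : AddChar (LinearMap.ker B) ℤ :=
    { toFun := fun y => signChar (q y)
      map_zero_eq_one' := by simpa [signChar_eq_one_iff] using hq 0 0
      map_add_eq_mul' := fun x y => by
        rw [Submodule.coe_add, hq, LinearMap.mem_ker.1 x.2, LinearMap.zero_apply, add_zero,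
          AddChar.map_add_eq_mul] }
  have hχ : ∑ y : LinearMap.ker B, signChar (q y) = if χ = 0 then _ else _ :=
    AddChar.sum_eq_ite χ
  rw [hsq, hχ]
  split_ifs
  · exact Or.inr (by rw [Nat.card_eq_fintype_card])
  · exact Or.inl (mul_zero _)

end Walsh

section Gold

variable {F : Type*} [Field F] [Algebra (ZMod 2) F]

/-- The Gold functions `x ↦ Tr (a x ^ (1 + 2 ^ e))`, as a linear family indexed by the
coefficient `a`. -/
noncomputable def goldFunction (e : ℕ) : F →ₗ[ZMod 2] F → ZMod 2 :=
  LinearMap.pi fun x => Algebra.trace (ZMod 2) F ∘ₗ LinearMap.mulRight (ZMod 2) (x ^ (1 + 2 ^ e))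

lemma goldFunction_apply (e : ℕ) (a x : F) :
    goldFunction e a x = Algebra.trace (ZMod 2) F (a * x ^ (1 + 2 ^ e)) := rfl

variable [Fintype F]

variable (F) in
/-- The polar form of the quadratic form `x ↦ Tr (x ^ (1 + 2 ^ e))`, written with all powers of the
second argument collected as `x ^ 2 ^ e` so that its radical can be read off. -/
noncomputable def goldPolarForm (e : ℕ) : LinearMap.BilinForm (ZMod 2) F :=
  (Algebra.traceForm (ZMod 2) F).compl₁₂
    ((frobeniusPow F (2 * e)).toLinearMap + LinearMap.id) (frobeniusPow F e).toLinearMap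

lemma goldPolarForm_apply (e : ℕ) (y x : F) :
    goldPolarForm F e y x =
      Algebra.trace (ZMod 2) F ((y ^ 2 ^ (2 * e) + y) * x ^ 2 ^ e) := by
  simp [goldPolarForm, Algebra.traceForm_apply, add_mul]

lemma goldFunction_one_add (e : ℕ) (x y : F) :
    goldFunction e 1 (x + y) =
      goldFunction e 1 x + goldFunction e 1 y + goldPolarForm F e x y := by
  have := charP_two_of_algebra_zmod F
  have hfrob : Algebra.trace (ZMod 2) F (y * x ^ 2 ^ e) =
      Algebra.trace (ZMod 2) F (y ^ 2 ^ e * x ^ 2 ^ (2 * e)) := by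
    rw [← trace_pow_two_pow e, mul_pow, ← pow_mul, ← pow_add, two_mul]
  have hexpand : (x + y) ^ (1 + 2 ^ e) =
      x ^ (1 + 2 ^ e) + y ^ (1 + 2 ^ e) + (x * y ^ 2 ^ e + y * x ^ 2 ^ e) := by
    rw [pow_add, add_pow_char_pow]
    ring
  rw [goldPolarForm_apply, goldFunction_apply, goldFunction_apply, goldFunction_apply]
  simp only [one_mul, hexpand, map_add, hfrob, add_mul]
  rw [add_comm (Algebra.trace _ _ (x * _)), mul_comm (y ^ _)]

lemma mem_ker_goldPolarForm {e : ℕ} {y : F} :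
    y ∈ LinearMap.ker (goldPolarForm F e) ↔ y ^ 2 ^ (2 * e) = y := by
  have := charP_two_of_algebra_zmod F
  rw [LinearMap.mem_ker, ← CharTwo.add_eq_zero (R := F)]
  refine ⟨fun hy => (traceForm_nondegenerate (ZMod 2) F).1 _ fun x => ?_, fun hy => ?_⟩
  · obtain ⟨z, rfl⟩ := (frobeniusPow F e).surjective x
    rw [frobeniusPow_apply, Algebra.traceForm_apply, ← goldPolarForm_apply, hy,
      LinearMap.zero_apply]
  · ext x
    rw [goldPolarForm_apply, hy, zero_mul, map_zero, LinearMap.zero_apply]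

lemma walshTransform_goldFunction_one_sq {m : ℕ} (hcard : Fintype.card F = 2 ^ m) (e : ℕ) (b : F) :
    walshTransform (goldFunction e 1) b ^ 2 = 0 ∨
      walshTransform (goldFunction e 1) b ^ 2 = 2 ^ m * 2 ^ Nat.gcd m (2 * e) := by
  classical
  have hradical : Nat.card (LinearMap.ker (goldPolarForm F e)) = 2 ^ Nat.gcd m (2 * e) := by
    rw [← card_filter_pow_pow_eq_self hcard, ← Fintype.card_subtype, ← Nat.card_eq_fintype_card]
    exact Nat.card_congr (Equiv.subtypeEquivRight fun y => mem_ker_goldPolarForm)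
  have hquad : ∀ x y : F, goldFunction e 1 (x + y) + Algebra.trace (ZMod 2) F (b * (x + y)) =
      (goldFunction e 1 x + Algebra.trace (ZMod 2) F (b * x)) +
        (goldFunction e 1 y + Algebra.trace (ZMod 2) F (b * y)) + goldPolarForm F e x y :=
    fun x y => by rw [goldFunction_one_add, mul_add, map_add]; ring
  have := sum_signChar_sq_eq_zero_or
    (q := fun x => goldFunction e 1 x + Algebra.trace (ZMod 2) F (b * x)) hquad
  rw [hradical, hcard] at this
  exact_mod_cast this

lemma walshTransform_goldFunction_pow (e : ℕ) {s : F} (hs : s ≠ 0) (b : F) :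
    walshTransform (goldFunction e (s ^ (1 + 2 ^ e))) b =
      walshTransform (goldFunction e 1) (b / s) := by
  refine Fintype.sum_equiv (Equiv.mulLeft₀ s hs) _ _ fun x => ?_
  rw [Equiv.mulLeft₀_apply, goldFunction_apply, goldFunction_apply, one_mul, mul_pow,
    ← mul_assoc (b / s), div_mul_cancel₀ b hs]

/-- Since `1 + 2 ^ e` is prime to `2 ^ m - 1`, every coefficient is a `(1 + 2 ^ e)`-th power, and
rescaling `x` reduces to the coefficient `1`. -/
lemma isPlateaued_goldFunction {m e h : ℕ} (hcard : Fintype.card F = 2 ^ m)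
    (hodd : Odd (m / Nat.gcd m e)) (hh : 2 * h = m - Nat.gcd m e) {a : F} (ha : a ≠ 0) :
    IsPlateaued (goldFunction e a) (2 ^ (m - h)) := by
  obtain ⟨s, hs, rfl⟩ :=
    exists_ne_zero_pow_eq_of_coprime (hcard ▸ coprime_two_pow_sub_one_one_add_two_pow hodd) ha
  intro b
  rw [walshTransform_goldFunction_pow e hs]
  refine (walshTransform_goldFunction_one_sq hcard e (b / s)).imp (pow_eq_zero_iff two_ne_zero).1
    fun hsq => sq_eq_sq_iff_eq_or_eq_neg.1 ?_
  have hm : 0 < m := Nat.pos_of_ne_zero (by rintro rfl; simp at hodd)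
  have hexp : m + Nat.gcd m e = (m - h) * 2 := by
    have := Nat.gcd_le_left e hm
    omega
  rw [hsq, Nat.gcd_comm, gcd_two_mul_of_odd_div_gcd hodd, ← pow_add, hexp, pow_mul]

end Gold

section TraceCode

lemma card_sub_two_mul_hammingNorm {I : Type*} [Fintype I] (y : I → ZMod 2) :
    (Fintype.card I : ℤ) - 2 * hammingNorm y = ∑ i, signChar (y i) := by
  simp only [signChar_eq_ite, sum_ite, sum_const, nsmul_eq_mul, mul_one, mul_neg]
  have hsplit := card_filter_add_card_filter_not (s := univ) fun i => y i = 0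
  rw [card_univ] at hsplit
  change _ - 2 * ((#{i | ¬ y i = 0} : ℕ) : ℤ) = _
  omega

lemma card_filter_signChar_mul_eq {X : Type*} [Fintype X] (g : X → ℤ) (t : ℤ) :
    #{p : X × ZMod 2 | signChar p.2 * g p.1 = t} = #{x | g x = t} + #{x | g x = -t} := by
  have hsum : ∀ x, (∑ c : ZMod 2, if signChar c * g x = t then 1 else 0) =
      (if g x = t then 1 else 0) + if g x = -t then 1 else 0 := fun x => by
    rw [show (univ : Finset (ZMod 2)) = {0, 1} from rfl, sum_pair zero_ne_one]
    simp [neg_eq_iff_eq_neg]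
  simp only [card_filter, Fintype.sum_prod_type, hsum, sum_add_distrib]

lemma card_filter_prod_eq_of_forall_ne {X Y : Type*} [Fintype X] [Fintype Y]
    {P : X → Y → Prop} [∀ x y, Decidable (P x y)] {x₀ : X} {k : ℕ}
    (hk : ∀ x ≠ x₀, #{y | P x y} = k) :
    #{p : X × Y | P p.1 p.2} = #{y | P x₀ y} + (Fintype.card X - 1) * k := by
  classical
  calc #{p : X × Y | P p.1 p.2} = ∑ x, #{y | P x y} := by
        simp only [card_filter, Fintype.sum_prod_type]
    _ = #{y | P x₀ y} + ∑ x ∈ univ.erase x₀, #{y | P x y} :=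
        (add_sum_erase _ _ (mem_univ x₀)).symm
    _ = #{y | P x₀ y} + (Fintype.card X - 1) * k := by
        rw [sum_congr rfl fun x hx => hk x (ne_of_mem_erase hx), sum_const,
          card_erase_of_mem (mem_univ _), card_univ, smul_eq_mul]

lemma two_pow_sub_two_mul_low_weight {m h : ℕ} (hhm : h < m) :
    (2 : ℤ) ^ m - 2 * (2 ^ (m - 1) - 2 ^ (m - 1 - h) : ℕ) = 2 ^ (m - h) := by
  rw [Nat.cast_sub (Nat.pow_le_pow_right two_pos (Nat.sub_le _ _))]
  push_cast
  rw [mul_sub, mul_pow_sub_one (by omega), Nat.sub_right_comm, mul_pow_sub_one (by omega)]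
  ring

lemma two_pow_sub_two_mul_high_weight {m h : ℕ} (hhm : h < m) :
    (2 : ℤ) ^ m - 2 * (2 ^ (m - 1) + 2 ^ (m - 1 - h) : ℕ) = -2 ^ (m - h) := by
  push_cast
  rw [mul_add, mul_pow_sub_one (by omega), Nat.sub_right_comm, mul_pow_sub_one (by omega)]
  ring

lemma ncard_hammingNorm_eq_zero {I K : Type*} [Fintype I] [Semiring K] [DecidableEq K]
    (C : Submodule K (I → K)) : {y | y ∈ C ∧ hammingNorm y = 0}.ncard = 1 :=
  Set.ncard_eq_one.2 ⟨0, Set.eq_singleton_iff_unique_mem.2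
    ⟨⟨zero_mem _, hammingNorm_zero⟩, fun _ hy => hammingNorm_eq_zero.1 hy.2⟩⟩

lemma ncard_hammingNorm_eq_card {I : Type*} [Fintype I] {C : Set (I → ZMod 2)} (hC : 1 ∈ C) :
    {y | y ∈ C ∧ hammingNorm y = Fintype.card I}.ncard = 1 := by
  refine Set.ncard_eq_one.2 ⟨1, Set.eq_singleton_iff_unique_mem.2
    ⟨⟨hC, by simp [hammingNorm]⟩, fun y hy => funext fun i => ?_⟩⟩
  exact Fin.eq_one_of_ne_zero _ (card_filter_eq_iff.1 hy.2 i (mem_univ i))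

variable {F : Type*} [Field F] [Algebra (ZMod 2) F] {I : Type*}
  {V : Type*} [AddCommGroup V] [Module (ZMod 2) V]

/-- The words `(f a x + Tr (b x) + c)ₓ` attached to a linear family `f` of Boolean functions, their
coordinates being indexed by `I` through an enumeration `ι` of the field. -/
noncomputable def traceWord (f : V →ₗ[ZMod 2] F → ZMod 2) (ι : I ≃ F) :
    V × F × ZMod 2 →ₗ[ZMod 2] I → ZMod 2 :=
  LinearMap.pi fun i => (LinearMap.proj (ι i) ∘ₗ f).coprod
    ((Algebra.trace (ZMod 2) F ∘ₗ LinearMap.mulRight (ZMod 2) (ι i)).coprod LinearMap.id)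

lemma traceWord_apply (f : V →ₗ[ZMod 2] F → ZMod 2) (ι : I ≃ F) (p : V × F × ZMod 2) (i : I) :
    traceWord f ι p i = f p.1 (ι i) + (Algebra.trace (ZMod 2) F (p.2.1 * ι i) + p.2.2) := rfl

/-- The code of all words `(f a x + Tr (b x) + c)ₓ`. -/
noncomputable def traceCode (f : V →ₗ[ZMod 2] F → ZMod 2) (ι : I ≃ F) :
    Submodule (ZMod 2) (I → ZMod 2) :=
  LinearMap.range (traceWord f ι)

lemma one_mem_traceCode (f : V →ₗ[ZMod 2] F → ZMod 2) (ι : I ≃ F) : 1 ∈ traceCode f ι :=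
  ⟨(0, 0, 1), by ext i; simp [traceWord_apply]⟩

variable [Fintype F] [Fintype I] {f : V →ₗ[ZMod 2] F → ZMod 2} {ι : I ≃ F} {m h : ℕ}

lemma two_pow_sub_two_mul_hammingNorm_traceWord (hcard : Fintype.card F = 2 ^ m)
    (p : V × F × ZMod 2) :
    (2 : ℤ) ^ m - 2 * hammingNorm (traceWord f ι p) =
      signChar p.2.2 * walshTransform (f p.1) p.2.1 := by
  have hI : (Fintype.card I : ℤ) = 2 ^ m := by
    rw [Fintype.card_congr ι, hcard, Nat.cast_pow, Nat.cast_ofNat]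
  rw [← hI, card_sub_two_mul_hammingNorm, walshTransform, mul_sum]
  refine Fintype.sum_equiv ι _ _ fun i => ?_
  rw [traceWord_apply, ← add_assoc, AddChar.map_add_eq_mul, mul_comm]

lemma hammingNorm_traceWord_eq_iff (hcard : Fintype.card F = 2 ^ m) {p : V × F × ZMod 2} {w : ℕ} :
    hammingNorm (traceWord f ι p) = w ↔
      signChar p.2.2 * walshTransform (f p.1) p.2.1 = 2 ^ m - 2 * w := by
  rw [← two_pow_sub_two_mul_hammingNorm_traceWord (ι := ι) hcard]
  omega

lemma IsPlateaued.card_support {g : F → ZMod 2} (hcard : Fintype.card F = 2 ^ m) (hhm : h ≤ m)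
    (hg : IsPlateaued g (2 ^ (m - h))) : #{b | walshTransform g b ≠ 0} = 2 ^ (2 * h) := by
  have hexp : m * 2 = 2 * h + (m - h) * 2 := by omega
  have hmul := hg.card_support_mul_sq
  rw [hcard] at hmul
  push_cast at hmul
  rw [← pow_mul, ← pow_mul, hexp, pow_add] at hmul
  exact_mod_cast mul_right_cancel₀ (by positivity) hmul

lemma IsPlateaued.card_signChar_mul_eq {g : F → ZMod 2} (hcard : Fintype.card F = 2 ^ m)
    (hhm : h ≤ m) (hg : IsPlateaued g (2 ^ (m - h))) {t : ℤ}
    (ht : t = 2 ^ (m - h) ∨ t = -2 ^ (m - h)) :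
    #{p : F × ZMod 2 | signChar p.2 * walshTransform g p.1 = t} = 2 ^ (2 * h) := by
  classical
  have hpos : (0 : ℤ) < 2 ^ (m - h) := by positivity
  rw [card_filter_signChar_mul_eq, ← hg.card_support hcard hhm, ← card_union_of_disjoint]
  · congr 1
    ext b
    simp only [mem_union, mem_filter, mem_univ, true_and]
    rcases hg b with hb | hb | hb <;> rcases ht with rfl | rfl <;> omega
  · refine disjoint_filter.2 fun b _ hb hb' => ?_
    rcases ht with rfl | rfl <;> omega

lemma IsPlateaued.card_signChar_mul_eq_zero {g : F → ZMod 2} (hcard : Fintype.card F = 2 ^ m)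
    (hhm : h ≤ m) (hg : IsPlateaued g (2 ^ (m - h))) :
    #{p : F × ZMod 2 | signChar p.2 * walshTransform g p.1 = 0} = 2 * (2 ^ m - 2 ^ (2 * h)) := by
  have hsplit := card_filter_add_card_filter_not (s := univ) fun b => walshTransform g b = 0
  rw [hg.card_support hcard hhm, card_univ, hcard] at hsplit
  rw [card_filter_signChar_mul_eq, neg_zero]
  omega

lemma isPlateaued_zero (hcard : Fintype.card F = 2 ^ m) :
    IsPlateaued (0 : F → ZMod 2) (2 ^ m) := by
  classical
  intro b
  rw [walshTransform_zero_left, hcard, Nat.cast_pow, Nat.cast_ofNat]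
  split_ifs
  · exact Or.inr (Or.inl rfl)
  · exact Or.inl rfl

lemma traceWord_injective {J : Type*} {ι : J ≃ F} (hcard : Fintype.card F = 2 ^ m) (h0 : 0 < h)
    (hhm : h ≤ m) (hf : ∀ a ≠ 0, IsPlateaued (f a) (2 ^ (m - h))) :
    Function.Injective (traceWord f ι) := by
  classical
  have := Fintype.ofEquiv F ι.symm
  refine (injective_iff_map_eq_zero _).2 fun p hp => ?_
  obtain ⟨a, b, c⟩ := p
  have hpow : (2 : ℤ) ^ (m - h) < 2 ^ m := pow_lt_pow_right₀ one_lt_two (by omega)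
  have hpos : (0 : ℤ) < 2 ^ (m - h) := by positivity
  have hsum := two_pow_sub_two_mul_hammingNorm_traceWord (f := f) (ι := ι) hcard (a, b, c)
  simp only [hp, hammingNorm_zero, Nat.cast_zero, mul_zero, sub_zero, signChar_eq_ite] at hsum
  obtain rfl : a = 0 := by
    by_contra ha
    rcases hf a ha b with h | h | h <;> rw [h] at hsum <;> split_ifs at hsum <;> omega
  rw [map_zero, walshTransform_zero_left, hcard] at hsum
  push_cast at hsum
  split_ifs at hsum with hb hc hc
  · rw [hb, hc, Prod.mk_zero_zero, Prod.mk_zero_zero]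
  all_goals omega

lemma ncard_traceCode_hammingNorm_eq [Fintype V] (hcard : Fintype.card F = 2 ^ m) (h0 : 0 < h)
    (hhm : h ≤ m) (hf : ∀ a ≠ 0, IsPlateaued (f a) (2 ^ (m - h))) (w : ℕ) :
    {y | y ∈ traceCode f ι ∧ hammingNorm y = w}.ncard =
      #{p : V × F × ZMod 2 |
        signChar p.2.2 * walshTransform (f p.1) p.2.1 = 2 ^ m - 2 * w} := by
  have himage : {y | y ∈ traceCode f ι ∧ hammingNorm y = w} =
      traceWord f ι '' {p | hammingNorm (traceWord f ι p) = w} := by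
    ext y
    constructor
    · rintro ⟨⟨p, rfl⟩, hp⟩
      exact ⟨p, hp, rfl⟩
    · rintro ⟨p, hp, rfl⟩
      exact ⟨⟨p, rfl⟩, hp⟩
  rw [himage, Set.ncard_image_of_injective _ (traceWord_injective hcard h0 hhm hf),
    ← Set.ncard_coe_finset]
  simp only [hammingNorm_traceWord_eq_iff hcard, coe_filter, mem_univ, true_and]

lemma ncard_traceCode_hammingNorm_eq_of_eq_or_eq_neg [Fintype V] (hcard : Fintype.card F = 2 ^ m)
    (h0 : 0 < h) (hhm : h ≤ m) (hf : ∀ a ≠ 0, IsPlateaued (f a) (2 ^ (m - h))) {w : ℕ}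
    (hw : (2 : ℤ) ^ m - 2 * w = 2 ^ (m - h) ∨ (2 : ℤ) ^ m - 2 * w = -2 ^ (m - h)) :
    {y | y ∈ traceCode f ι ∧ hammingNorm y = w}.ncard =
      (Fintype.card V - 1) * 2 ^ (2 * h) := by
  have hpow : (2 : ℤ) ^ (m - h) < 2 ^ m := pow_lt_pow_right₀ one_lt_two (by omega)
  have hpos : (0 : ℤ) < 2 ^ (m - h) := by positivity
  have hzero :
      #{q : F × ZMod 2 | signChar q.2 * walshTransform (f 0) q.1 = 2 ^ m - 2 * w} = 0 := by
    rw [map_zero, card_filter_signChar_mul_eq, Nat.add_eq_zero_iff, card_filter_eq_zero_iff,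
      card_filter_eq_zero_iff]
    constructor <;> intro b _ hb <;> have := isPlateaued_zero hcard b <;>
      rw [hb] at this <;> omega
  have hfiber := card_filter_prod_eq_of_forall_ne
    (P := fun (a : V) (q : F × ZMod 2) =>
      signChar q.2 * walshTransform (f a) q.1 = 2 ^ m - 2 * w)
    fun a ha => (hf a ha).card_signChar_mul_eq hcard hhm hw
  rw [ncard_traceCode_hammingNorm_eq hcard h0 hhm hf, hfiber, hzero, zero_add]

lemma ncard_traceCode_hammingNorm_eq_two_pow_sub_one [Fintype V] (hcard : Fintype.card F = 2 ^ m)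
    (h0 : 0 < h) (hhm : h ≤ m) (hf : ∀ a ≠ 0, IsPlateaued (f a) (2 ^ (m - h))) :
    {y | y ∈ traceCode f ι ∧ hammingNorm y = 2 ^ (m - 1)}.ncard =
      2 * (2 ^ m - 1) + (Fintype.card V - 1) * (2 * (2 ^ m - 2 ^ (2 * h))) := by
  have hmid : (2 : ℤ) ^ m - 2 * (2 ^ (m - 1) : ℕ) = 0 := by
    push_cast
    rw [mul_pow_sub_one (by omega), sub_self]
  have hzero : #{q : F × ZMod 2 | signChar q.2 * walshTransform (f 0) q.1 = 0} =
      2 * (2 ^ m - 1) := by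
    rw [map_zero, (isPlateaued_zero hcard).card_signChar_mul_eq_zero (h := 0) hcard m.zero_le,
      mul_zero, pow_zero]
  have hfiber := card_filter_prod_eq_of_forall_ne
    (P := fun (a : V) (q : F × ZMod 2) => signChar q.2 * walshTransform (f a) q.1 = 0)
    fun a ha => (hf a ha).card_signChar_mul_eq_zero hcard hhm
  rw [ncard_traceCode_hammingNorm_eq hcard h0 hhm hf, hmid, hfiber, hzero]

lemma hammingNorm_mem_of_mem_traceCode (hcard : Fintype.card F = 2 ^ m) (hhm : h < m)
    (hf : ∀ a ≠ 0, IsPlateaued (f a) (2 ^ (m - h))) {y : I → ZMod 2} (hy : y ∈ traceCode f ι) :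
    hammingNorm y ∈ ({0, 2 ^ (m - 1) - 2 ^ (m - 1 - h), 2 ^ (m - 1),
      2 ^ (m - 1) + 2 ^ (m - 1 - h), 2 ^ m} : Set ℕ) := by
  obtain ⟨p, rfl⟩ := hy
  have hm : (2 : ℤ) ^ m = (2 ^ m : ℕ) := (Nat.cast_pow 2 m).symm
  have hmid : 2 * 2 ^ (m - 1) = 2 ^ m := mul_pow_sub_one (by omega) 2
  have hlow := two_pow_sub_two_mul_low_weight hhm
  have hhigh := two_pow_sub_two_mul_high_weight hhm
  have hsum := two_pow_sub_two_mul_hammingNorm_traceWord (f := f) (ι := ι) hcard p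
  simp only [Set.mem_insert_iff, Set.mem_singleton_iff]
  rw [signChar_eq_ite] at hsum
  by_cases hp : p.1 = 0
  · rw [hp, map_zero] at hsum
    rcases isPlateaued_zero hcard p.2.1 with hW | hW | hW <;> rw [hW] at hsum <;>
      split_ifs at hsum <;> omega
  · rcases hf _ hp p.2.1 with hW | hW | hW <;> rw [hW] at hsum <;> split_ifs at hsum <;> omega

lemma isLeast_hammingNorm_traceCode [Finite V] [Nontrivial V] (hcard : Fintype.card F = 2 ^ m)
    (h0 : 0 < h) (hhm : h < m) (hf : ∀ a ≠ 0, IsPlateaued (f a) (2 ^ (m - h))) :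
    IsLeast {i | ∃ y ∈ traceCode f ι, y ≠ 0 ∧ hammingNorm y = i}
      (2 ^ (m - 1) - 2 ^ (m - 1 - h)) := by
  have := Fintype.ofFinite V
  have hlt : 2 ^ (m - 1 - h) < 2 ^ (m - 1) := Nat.pow_lt_pow_right one_lt_two (by omega)
  refine ⟨?_, fun i => ?_⟩
  · have hcount : _ = (Fintype.card V - 1) * 2 ^ (2 * h) :=
      ncard_traceCode_hammingNorm_eq_of_eq_or_eq_neg (ι := ι) hcard h0 hhm.le hf
        (Or.inl (two_pow_sub_two_mul_low_weight hhm))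
    have hV : 0 < Fintype.card V - 1 := Nat.sub_pos_of_lt Fintype.one_lt_card
    obtain ⟨y, hy, hyw⟩ := Set.nonempty_of_ncard_ne_zero (hcount.trans_ne (by positivity))
    exact ⟨y, hy, hammingNorm_ne_zero_iff.1 (by omega), hyw⟩
  · rintro ⟨y, hy, hy0, rfl⟩
    have hle : 2 ^ (m - 1) - 2 ^ (m - 1 - h) ≤ 2 ^ (m - 1) := Nat.sub_le _ _
    rcases hammingNorm_mem_of_mem_traceCode hcard hhm hf hy with hw | hw | hw | hw | hw
    · exact absurd hw (hammingNorm_ne_zero_iff.2 hy0)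
    · exact hw.ge
    · exact hle.trans hw.ge
    · exact hle.trans ((Nat.le_add_right _ _).trans hw.ge)
    · exact hle.trans ((Nat.pow_le_pow_right two_pos (Nat.sub_le m 1)).trans hw.ge)

end TraceCode

section LinearCode

lemma finrank_dualCode_add_finrank {K : Type*} [Field K] {n : ℕ} (C : Submodule K (Fin n → K)) :
    Module.finrank K (dualCode (C : Set (Fin n → K))) + Module.finrank K C = n := by
  set B := Matrix.toBilin' (1 : Matrix (Fin n) (Fin n) K) with hB
  have hnondeg : B.Nondegenerate :=
    LinearMap.BilinForm.nondegenerate_toBilin'_of_det_ne_zero' _ (by simp)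
  have horth : dualCode (C : Set (Fin n → K)) = B.orthogonal C := by
    ext y
    rw [LinearMap.BilinForm.mem_orthogonal_iff]
    refine forall₂_congr fun c _ => ?_
    rw [hB, Matrix.toBilin'_apply', Matrix.one_mulVec]
    simp only [dotProduct, mul_comm]
  rw [horth, LinearMap.BilinForm.finrank_orthogonal hnondeg, Module.finrank_fin_fun]
  exact Nat.sub_add_cancel ((Submodule.finrank_le C).trans_eq (Module.finrank_fin_fun K))

lemma dualCode_ker_eq_range {K V W : Type*} [Field K] [AddCommGroup V] [Module K V]
    [AddCommGroup W] [Module K W] [FiniteDimensional K W] {n : ℕ} {H : (Fin n → K) →ₗ[K] W}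
    {T : V →ₗ[K] Fin n → K} (hT : Function.Injective T)
    (horth : ∀ v, T v ∈ dualCode (LinearMap.ker H : Set (Fin n → K)))
    (hdim : Module.finrank K W ≤ Module.finrank K V) :
    dualCode (LinearMap.ker H : Set (Fin n → K)) = LinearMap.range T := by
  refine (Submodule.eq_of_le_of_finrank_le (LinearMap.range_le_iff_comap.2 ?_) ?_).symm
  · exact Submodule.eq_top_iff'.2 horth
  · have hdual := finrank_dualCode_add_finrank (LinearMap.ker H)
    have hrank := H.finrank_range_add_finrank_ker
    rw [Module.finrank_fin_fun] at hrank
    rw [LinearMap.finrank_range_of_inj hT]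
    have := Submodule.finrank_le (LinearMap.range H)
    omega

lemma apply_mem_dualCode_ker_linearCombination {K M : Type*} [CommRing K] [AddCommGroup M]
    [Module K M] {n : ℕ} (v : Fin n → M) (φ : M →ₗ[K] K) :
    (fun i => φ (v i)) ∈
      dualCode (LinearMap.ker (Fintype.linearCombination K v) : Set (Fin n → K)) := by
  intro c hc
  have hsum : φ (∑ i, c i • v i) = 0 := by
    rw [← Fintype.linearCombination_apply, LinearMap.mem_ker.1 hc, map_zero]
  simpa only [map_sum, map_smul, smul_eq_mul, mul_comm] using hsum

variable {I X M : Type*} [Fintype I] [AddCommGroup M] [Module (ZMod 2) M]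

lemma linearCombination_zmod_two_apply (v : I → M) (c : I → ZMod 2) :
    Fintype.linearCombination (ZMod 2) v c = ∑ i with c i ≠ 0, v i := by
  rw [Fintype.linearCombination_apply, sum_filter]
  refine sum_congr rfl fun i _ => ?_
  split_ifs with hi
  · rw [Fin.eq_one_of_ne_zero (c i) hi]
    exact one_smul _ _
  · rw [not_not.1 hi, zero_smul]

lemma setOf_hammingNorm_ker_linearCombination (v : X → M) (ι : I ≃ X) :
    {w | ∃ c ∈ LinearMap.ker (Fintype.linearCombination (ZMod 2) (v ∘ ι)),
        c ≠ 0 ∧ hammingNorm c = w} =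
      {w | ∃ S : Finset X, S.Nonempty ∧ ∑ x ∈ S, v x = 0 ∧ #S = w} := by
  classical
  ext w
  constructor
  · rintro ⟨c, hc, hc0, rfl⟩
    refine ⟨({i | c i ≠ 0} : Finset I).map ι.toEmbedding, ?_, ?_, card_map _⟩
    · rw [map_nonempty, ← card_pos]
      exact hammingNorm_pos_iff.2 hc0
    · rw [sum_map]
      rwa [LinearMap.mem_ker, linearCombination_zmod_two_apply] at hc
  · rintro ⟨S, hS, hsum, rfl⟩
    have hsupp : ({i | (if ι i ∈ S then (1 : ZMod 2) else 0) ≠ 0} : Finset I) =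
        S.map ι.symm.toEmbedding := by
      ext i
      simp
    have hnorm : hammingNorm (fun i => if ι i ∈ S then (1 : ZMod 2) else 0) = #S := by
      rw [hammingNorm, hsupp, card_map]
    refine ⟨fun i => if ι i ∈ S then 1 else 0, ?_, ?_, hnorm⟩
    · rw [LinearMap.mem_ker, linearCombination_zmod_two_apply, hsupp, sum_map]
      simpa using hsum
    · exact hammingNorm_ne_zero_iff.1 (hnorm.trans_ne hS.card_pos.ne')

lemma sum_symmDiff_eq_zero [DecidableEq X] {S T : Finset X} {v : X → M}
    (h : ∑ x ∈ S, v x = ∑ x ∈ T, v x) : ∑ x ∈ symmDiff S T, v x = 0 := by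
  rw [← sum_inter_add_sum_sdiff S T, ← sum_inter_add_sum_sdiff T S, inter_comm] at h
  rw [symmDiff_def, sup_eq_union, sum_union disjoint_sdiff_sdiff, add_left_cancel h,
    ← two_smul (ZMod 2), show (2 : ZMod 2) = 0 from rfl, zero_smul]

end LinearCode

section GoldCode

variable {F : Type*} [Field F]

/-- The column of the parity-check matrix of the extended code at the coordinate `x`. -/
def goldColumn (e : ℕ) (x : F) : F × F × ZMod 2 := (x, x ^ (1 + 2 ^ e), 1)

lemma sum_goldColumn (e : ℕ) (S : Finset F) :
    ∑ x ∈ S, goldColumn e x = (∑ x ∈ S, x, ∑ x ∈ S, x ^ (1 + 2 ^ e), (#S : ZMod 2)) := by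
  ext <;> simp [goldColumn, Prod.fst_sum, Prod.snd_sum]

lemma even_card_of_sum_goldColumn_eq_zero {e : ℕ} {S : Finset F}
    (hS : ∑ x ∈ S, goldColumn e x = 0) : Even #S := by
  rw [sum_goldColumn] at hS
  exact ZMod.natCast_eq_zero_iff_even.1 (congrArg (·.2.2) hS)

lemma four_le_card_of_sum_goldColumn_eq_zero [CharP F 2] {e : ℕ} {S : Finset F}
    (hS : ∑ x ∈ S, goldColumn e x = 0) (hne : S.Nonempty) : 4 ≤ #S := by
  classical
  have htwo : #S ≠ 2 := by
    intro hcard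
    obtain ⟨x, y, hxy, rfl⟩ := card_eq_two.1 hcard
    rw [sum_goldColumn, sum_pair hxy] at hS
    exact hxy (CharTwo.add_eq_zero.1 (congrArg Prod.fst hS))
  obtain ⟨k, hk⟩ := even_card_of_sum_goldColumn_eq_zero hS
  have := hne.card_pos
  omega

/-- The affine subspace `x + ⟨u, v⟩` over `𝔽₂`, a plane when `u ≠ v` are both nonzero. -/
def affinePlane [DecidableEq F] (x u v : F) : Finset F := {x, x + u, x + v, x + u + v}

section AffinePlane

variable [DecidableEq F] [CharP F 2]

lemma sum_affinePlane {M : Type*} [AddCommMonoid M] (g : F → M) {x u v : F} (hu : u ≠ 0)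
    (hv : v ≠ 0) (huv : u ≠ v) :
    ∑ y ∈ affinePlane x u v, g y = g x + g (x + u) + g (x + v) + g (x + u + v) := by
  have huv' : u + v ≠ 0 := fun h => huv (CharTwo.add_eq_zero.1 h)
  rw [affinePlane, sum_insert, sum_insert, sum_pair, add_assoc, add_assoc, add_assoc] <;>
    simp_all [add_assoc]

lemma card_affinePlane {x u v : F} (hu : u ≠ 0) (hv : v ≠ 0) (huv : u ≠ v) :
    #(affinePlane x u v) = 4 := by
  rw [card_eq_sum_ones, sum_affinePlane _ hu hv huv]

lemma sum_goldColumn_affinePlane_eq_zero_iff {e : ℕ} {x u v : F} (hu : u ≠ 0) (hv : v ≠ 0)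
    (huv : u ≠ v) :
    ∑ y ∈ affinePlane x u v, goldColumn e y = 0 ↔ (u / v) ^ 2 ^ e = u / v := by
  have hfirst : x + (x + u) + (x + v) + (x + u + v) = 0 := by
    linear_combination (2 * x + u + v) * (CharTwo.two_eq_zero : (2 : F) = 0)
  rw [sum_goldColumn, card_affinePlane hu hv huv, sum_affinePlane _ hu hv huv,
    sum_affinePlane _ hu hv huv, pow_one_add_two_pow_second_difference, hfirst, Prod.mk_eq_zero,
    Prod.mk_eq_zero, div_pow, div_eq_div_iff (pow_ne_zero _ hv) hv, CharTwo.add_eq_zero,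
    mul_comm v, eq_comm (a := u * _)]
  exact ⟨fun h => h.2.1, fun h => ⟨rfl, h, rfl⟩⟩

lemma exists_eq_affinePlane {S : Finset F} (hcard : #S = 4) (hsum : ∑ x ∈ S, x = 0) :
    ∃ x u v, u ≠ 0 ∧ v ≠ 0 ∧ u ≠ v ∧ S = affinePlane x u v := by
  obtain ⟨x, y, z, w, hxy, hxz, hxw, hyz, hyw, hzw, rfl⟩ := card_eq_four.1 hcard
  have htwo : (2 : F) = 0 := CharTwo.two_eq_zero
  rw [sum_insert, sum_insert, sum_pair hzw] at hsum
  · have hy : x + (x + y) = y := by linear_combination x * htwo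
    have hz : x + (x + z) = z := by linear_combination x * htwo
    have hw : x + (x + y) + (x + z) = w := by linear_combination hsum + (x - w) * htwo
    refine ⟨x, x + y, x + z, CharTwo.add_eq_zero.not.2 hxy, CharTwo.add_eq_zero.not.2 hxz,
      (add_right_injective x).ne hyz, ?_⟩
    rw [affinePlane, hw, hy, hz]
  all_goals simp_all

end AffinePlane

lemma six_le_card_of_sum_goldColumn_eq_zero [CharP F 2] {e : ℕ}
    (hfix : ∀ x : F, x ^ 2 ^ e = x → x = 0 ∨ x = 1) {S : Finset F}
    (hS : ∑ x ∈ S, goldColumn e x = 0) (hne : S.Nonempty) : 6 ≤ #S := by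
  classical
  have hfour : #S ≠ 4 := by
    intro hcard
    obtain ⟨x, u, v, hu, hv, huv, rfl⟩ := exists_eq_affinePlane hcard
      (congrArg Prod.fst ((sum_goldColumn e S).symm.trans hS))
    rw [sum_goldColumn_affinePlane_eq_zero_iff hu hv huv] at hS
    rcases hfix _ hS with h | h
    · exact div_ne_zero hu hv h
    · exact huv ((div_eq_one_iff_eq hv).1 h)
  have := four_le_card_of_sum_goldColumn_eq_zero hS hne
  obtain ⟨k, hk⟩ := even_card_of_sum_goldColumn_eq_zero hS
  omega

lemma sq_lt_choose_three {q : ℕ} (hq : 9 ≤ q) : q ^ 2 < q.choose 3 := by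
  obtain ⟨k, rfl⟩ := Nat.exists_eq_add_of_le' hq
  have hchoose := Nat.descFactorial_eq_factorial_mul_choose (k + 9) 3
  simp only [Nat.succ_descFactorial_succ, Nat.descFactorial_zero, Nat.factorial] at hchoose
  nlinarith

lemma exists_card_le_six_sum_goldColumn_eq_zero [Algebra (ZMod 2) F] [Fintype F]
    (hcard : 9 ≤ Fintype.card F) (e : ℕ) :
    ∃ S : Finset F, S.Nonempty ∧ ∑ x ∈ S, goldColumn e x = 0 ∧ #S ≤ 6 := by
  classical
  have hpigeon : #(univ : Finset (F × F)) < #(powersetCard 3 (univ : Finset F)) := by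
    rw [card_powersetCard, card_univ, card_univ, Fintype.card_prod, ← sq]
    exact sq_lt_choose_three hcard
  obtain ⟨S, hS, T, hT, hne, hST⟩ := exists_ne_map_eq_of_card_lt_of_maps_to hpigeon
    (f := fun S => (∑ x ∈ S, x, ∑ x ∈ S, x ^ (1 + 2 ^ e))) fun _ _ => mem_univ _
  rw [mem_powersetCard] at hS hT
  simp only [Prod.mk.injEq] at hST
  refine ⟨symmDiff S T, symmDiff_nonempty.2 hne, sum_symmDiff_eq_zero ?_, ?_⟩
  · rw [sum_goldColumn, sum_goldColumn, hST.1, hST.2, hS.2, hT.2]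
  · calc #(symmDiff S T) ≤ #(S ∪ T) := card_le_card symmDiff_le_sup
      _ ≤ #S + #T := card_union_le _ _
      _ = 6 := by rw [hS.2, hT.2]

lemma isLeast_card_sum_goldColumn_eq_zero_four [CharP F 2] {e : ℕ} {v : F} (hv0 : v ≠ 0)
    (hv1 : v ≠ 1) (hv : v ^ 2 ^ e = v) :
    IsLeast {w | ∃ S : Finset F, S.Nonempty ∧ ∑ x ∈ S, goldColumn e x = 0 ∧ #S = w} 4 := by
  classical
  have hcard : #(affinePlane 0 v 1) = 4 := card_affinePlane hv0 one_ne_zero hv1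
  refine ⟨⟨affinePlane 0 v 1, card_pos.1 (by omega), ?_, hcard⟩, ?_⟩
  · rwa [sum_goldColumn_affinePlane_eq_zero_iff hv0 one_ne_zero hv1, div_one]
  · rintro _ ⟨S, hne, hS, rfl⟩
    exact four_le_card_of_sum_goldColumn_eq_zero hS hne

lemma isLeast_card_sum_goldColumn_eq_zero_six [Algebra (ZMod 2) F] [Fintype F]
    (hcard : 9 ≤ Fintype.card F) {e : ℕ} (hfix : ∀ x : F, x ^ 2 ^ e = x → x = 0 ∨ x = 1) :
    IsLeast {w | ∃ S : Finset F, S.Nonempty ∧ ∑ x ∈ S, goldColumn e x = 0 ∧ #S = w} 6 := by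
  have := charP_two_of_algebra_zmod F
  obtain ⟨S, hne, hS, hle⟩ := exists_card_le_six_sum_goldColumn_eq_zero hcard e
  refine ⟨⟨S, hne, hS, hle.antisymm (six_le_card_of_sum_goldColumn_eq_zero hfix hS hne)⟩, ?_⟩
  rintro _ ⟨T, hne, hT, rfl⟩
  exact six_le_card_of_sum_goldColumn_eq_zero hfix hT hne

variable [Algebra (ZMod 2) F]

/-- The extended code `C̄_E`, described by its parity-check matrix; `ι` labels the coordinates by
the field elements. -/
def goldCode {I : Type*} [Fintype I] (e : ℕ) (ι : I ≃ F) : Submodule (ZMod 2) (I → ZMod 2) :=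
  LinearMap.ker (Fintype.linearCombination (ZMod 2) (goldColumn e ∘ ι))

lemma mem_goldCode_iff {I : Type*} [Fintype I] {e : ℕ} {ι : I ≃ F} {c : I → ZMod 2} :
    c ∈ goldCode e ι ↔
      ∑ i, c i • ι i = 0 ∧ ∑ i, c i • ι i ^ (1 + 2 ^ e) = 0 ∧ ∑ i, c i = 0 := by
  simp [goldCode, Fintype.linearCombination_apply, goldColumn, Prod.ext_iff, Prod.fst_sum,
    Prod.snd_sum]

lemma traceWord_goldFunction_mem_dualCode {n : ℕ} (e : ℕ) (ι : Fin n ≃ F) (p : F × F × ZMod 2) :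
    traceWord (goldFunction e) ι p ∈ dualCode (goldCode e ι : Set (Fin n → ZMod 2)) := by
  let φ : F × F × ZMod 2 →ₗ[ZMod 2] ZMod 2 :=
    (Algebra.traceForm (ZMod 2) F p.2.1).coprod
      ((Algebra.traceForm (ZMod 2) F p.1).coprod (LinearMap.mulLeft (ZMod 2) p.2.2))
  have hword : traceWord (goldFunction e) ι p = fun i => φ (goldColumn e (ι i)) := by
    ext i
    simp only [traceWord_apply, goldFunction_apply, φ, goldColumn, LinearMap.coprod_apply,
      Algebra.traceForm_apply, LinearMap.mulLeft_apply, mul_one]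
    ring
  rw [hword]
  exact apply_mem_dualCode_ker_linearCombination (goldColumn e ∘ ι) φ

variable [Fintype F] {m e : ℕ}

lemma isLeast_hammingNorm_goldCode_four {I : Type*} [Fintype I] (ι : I ≃ F)
    (hcard : Fintype.card F = 2 ^ m) (hg : 1 < Nat.gcd e m) :
    IsLeast {w | ∃ c ∈ goldCode e ι, c ≠ 0 ∧ hammingNorm c = w} 4 := by
  classical
  have := charP_two_of_algebra_zmod F
  obtain ⟨v, hv, hv01⟩ : ∃ v ∈ ({x | x ^ 2 ^ e = x} : Finset F), v ∉ ({0, 1} : Finset F) := by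
    refine exists_mem_notMem_of_card_lt_card ?_
    rw [card_filter_pow_pow_eq_self hcard, card_pair zero_ne_one, Nat.gcd_comm]
    exact (Nat.pow_lt_pow_right one_lt_two hg).trans_eq' (pow_one 2)
  simp only [mem_insert, mem_singleton, not_or] at hv01
  rw [goldCode, setOf_hammingNorm_ker_linearCombination]
  exact isLeast_card_sum_goldColumn_eq_zero_four hv01.1 hv01.2 (mem_filter.1 hv).2

lemma isLeast_hammingNorm_goldCode_six {I : Type*} [Fintype I] (ι : I ≃ F)
    (hcard : Fintype.card F = 2 ^ m) (hm : 4 ≤ m) (hg : Nat.gcd e m = 1) :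
    IsLeast {w | ∃ c ∈ goldCode e ι, c ≠ 0 ∧ hammingNorm c = w} 6 := by
  classical
  have hfixed : ({0, 1} : Finset F) = ({x | x ^ 2 ^ e = x} : Finset F) := by
    refine eq_of_subset_of_card_le ?_ ?_
    · simp [insert_subset_iff]
    · rw [card_filter_pow_pow_eq_self hcard, card_pair zero_ne_one, Nat.gcd_comm, hg, pow_one]
  have hlarge : 2 ^ 4 ≤ Fintype.card F := hcard ▸ Nat.pow_le_pow_right two_pos hm
  rw [goldCode, setOf_hammingNorm_ker_linearCombination]
  refine isLeast_card_sum_goldColumn_eq_zero_six (by omega) fun x hx => ?_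
  have hx01 : x ∈ ({0, 1} : Finset F) := hfixed ▸ mem_filter.2 ⟨mem_univ x, hx⟩
  simpa only [mem_insert, mem_singleton] using hx01

lemma finrank_zmod_two_eq (hcard : Fintype.card F = 2 ^ m) : Module.finrank (ZMod 2) F = m := by
  have h := Module.card_eq_pow_finrank (K := ZMod 2) (V := F)
  rw [hcard, ZMod.card] at h
  exact (Nat.pow_right_injective le_rfl h).symm

lemma dualCode_goldCode {n h : ℕ} {ι : Fin n ≃ F} (hcard : Fintype.card F = 2 ^ m) (h0 : 0 < h)
    (hodd : Odd (m / Nat.gcd m e)) (hh : 2 * h = m - Nat.gcd m e) :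
    dualCode (goldCode e ι : Set (Fin n → ZMod 2)) = traceCode (goldFunction e) ι :=
  dualCode_ker_eq_range
    (traceWord_injective hcard h0 (by omega) fun _ => isPlateaued_goldFunction hcard hodd hh)
    (traceWord_goldFunction_mem_dualCode e ι) le_rfl

lemma finrank_traceCode_goldFunction {I : Type*} {h : ℕ} {ι : I ≃ F}
    (hcard : Fintype.card F = 2 ^ m) (h0 : 0 < h) (hodd : Odd (m / Nat.gcd m e))
    (hh : 2 * h = m - Nat.gcd m e) :
    Module.finrank (ZMod 2) (traceCode (goldFunction e) ι) = 2 * m + 1 := by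
  have hinj : Function.Injective (traceWord (goldFunction e) ι) :=
    traceWord_injective hcard h0 (by omega) fun _ => isPlateaued_goldFunction hcard hodd hh
  rw [traceCode, LinearMap.finrank_range_of_inj hinj, Module.finrank_prod, Module.finrank_prod,
    finrank_zmod_two_eq hcard, Module.finrank_self]
  ring

lemma finrank_goldCode {n h : ℕ} {ι : Fin n ≃ F} (hcard : Fintype.card F = 2 ^ m) (h0 : 0 < h)
    (hodd : Odd (m / Nat.gcd m e)) (hh : 2 * h = m - Nat.gcd m e) :
    Module.finrank (ZMod 2) (goldCode e ι) = n - 1 - 2 * m := by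
  have hdual := finrank_dualCode_add_finrank (goldCode e ι)
  rw [dualCode_goldCode hcard h0 hodd hh, finrank_traceCode_goldFunction hcard h0 hodd hh] at hdual
  omega

end GoldCode

section CyclicCode

lemma exists_equiv_eq_pow_or_zero {F : Type*} [Field F] [Fintype F] {q : ℕ}
    (hcard : Fintype.card F = q) {α : F} (hα : orderOf α = q - 1) :
    ∃ ι : Fin q ≃ F, ∀ i, ι i = if (i : ℕ) < q - 1 then α ^ (i : ℕ) else 0 := by
  have hq : 1 < q := hcard ▸ Fintype.one_lt_card
  have hα0 : α ≠ 0 := by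
    rintro rfl
    rw [orderOf_zero] at hα
    omega
  let f : Fin q → F := fun i => if (i : ℕ) < q - 1 then α ^ (i : ℕ) else 0
  have hinj : Function.Injective f := by
    intro i j hij
    simp only [f] at hij
    split_ifs at hij with hi hj hj
    · exact Fin.ext (pow_injOn_Iio_orderOf (hα ▸ hi) (hα ▸ hj) hij)
    · exact absurd hij (pow_ne_zero _ hα0)
    · exact absurd hij.symm (pow_ne_zero _ hα0)
    · omega
  have hbij : Function.Bijective f :=
    (Fintype.bijective_iff_injective_and_card f).2 ⟨hinj, by rw [Fintype.card_fin, hcard]⟩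
  exact ⟨Equiv.ofBijective f hbij, fun _ => rfl⟩

/-- A conjugation `α ↦ α ^ (1 + 2 ^ e)` would make `x ↦ x ^ (1 + 2 ^ e)` additive, forcing
`x ^ 2 ^ e = x` on the whole field. -/
lemma minpoly_ne_minpoly_pow_one_add_two_pow {F : Type*} [Field F] [Fintype F]
    [Algebra (ZMod 2) F] {m e : ℕ} (hcard : Fintype.card F = 2 ^ m) (hem : ¬ m ∣ e) {α : F}
    (hα : orderOf α = 2 ^ m - 1) :
    minpoly (ZMod 2) α ≠ minpoly (ZMod 2) (α ^ (1 + 2 ^ e)) := by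
  classical
  have := charP_two_of_algebra_zmod F
  intro hminpoly
  obtain ⟨σ, hσα⟩ := (isConjRoot_iff_exists_algEquiv (K := ZMod 2)).1
    (show IsConjRoot (ZMod 2) (α ^ (1 + 2 ^ e)) α from hminpoly.symm)
  obtain ⟨ι, hι⟩ := exists_equiv_eq_pow_or_zero hcard hα
  have hσ : ∀ x, σ x = x ^ (1 + 2 ^ e) := by
    intro x
    obtain ⟨i, rfl⟩ := ι.surjective x
    rw [hι]
    split_ifs
    · rw [map_pow, hσα, pow_right_comm]
    · simp
  have hfixed : ∀ x : F, x ^ 2 ^ e = x := by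
    intro x
    have hadd := map_add σ 1 x
    rw [map_one, hσ, hσ, pow_add, add_pow_char_pow, pow_one, one_pow] at hadd
    refine CharTwo.add_eq_zero.1 ?_
    linear_combination hadd
  have hcount := card_filter_pow_pow_eq_self hcard e
  rw [filter_true_of_mem fun x _ => hfixed x, card_univ, hcard] at hcount
  exact hem (Nat.gcd_eq_left_iff_dvd.1 (Nat.pow_right_injective le_rfl hcount).symm)

lemma aeval_codePoly {A : Type*} [CommRing A] [Algebra (ZMod 2) A] {n : ℕ} (c : Fin n → ZMod 2)
    (β : A) : aeval β (codePoly c) = ∑ i, c i • β ^ (i : ℕ) := by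
  simp [codePoly, Algebra.smul_def]

variable {m e : ℕ} {α : GaloisField 2 m}

lemma mem_CE_iff (hm : m ≠ 0) (hem : ¬ m ∣ e) (hα : orderOf α = 2 ^ m - 1)
    (c : Fin (2 ^ m - 1) → ZMod 2) :
    c ∈ CE m e α ↔
      ∑ i, c i • α ^ (i : ℕ) = 0 ∧ ∑ i, c i • (α ^ (i : ℕ)) ^ (1 + 2 ^ e) = 0 := by
  have := Fintype.ofFinite (GaloisField 2 m)
  have hcard : Fintype.card (GaloisField 2 m) = 2 ^ m :=
    Fintype.card_eq_nat_card.trans (GaloisField.card 2 m hm)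
  have hcop : IsCoprime (minpoly (ZMod 2) α) (minpoly (ZMod 2) (α ^ (1 + 2 ^ e))) := by
    have hint : ∀ β : GaloisField 2 m, IsIntegral (ZMod 2) β := Algebra.IsIntegral.isIntegral
    rw [(minpoly.irreducible (hint α)).coprime_iff_not_dvd]
    intro hdvd
    exact minpoly_ne_minpoly_pow_one_add_two_pow hcard hem hα
      (eq_of_monic_of_associated (minpoly.monic (hint _)) (minpoly.monic (hint _))
        ((minpoly.irreducible (hint _)).associated_of_dvd (minpoly.irreducible (hint _)) hdvd))
  simp only [pow_right_comm α _ (1 + 2 ^ e)]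
  rw [← aeval_codePoly, ← aeval_codePoly, ← minpoly.dvd_iff, ← minpoly.dvd_iff]
  exact ⟨fun h => ⟨dvd_of_mul_right_dvd h, dvd_of_mul_left_dvd h⟩, fun h => hcop.mul_dvd h.1 h.2⟩

lemma sum_univ_castLE_sub_one {M : Type*} [AddCommMonoid M] {n : ℕ} (hn : n ≠ 0) (f : Fin n → M) :
    ∑ i, f i = ∑ i : Fin (n - 1), f (Fin.castLE (Nat.sub_le _ _) i) + f ⟨n - 1, by omega⟩ := by
  obtain ⟨k, rfl⟩ := Nat.exists_eq_succ_of_ne_zero hn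
  exact Fin.sum_univ_castSucc f

lemma CEbar_eq_goldCode (hm : m ≠ 0) (hem : ¬ m ∣ e) (hα : orderOf α = 2 ^ m - 1)
    {ι : Fin (2 ^ m) ≃ GaloisField 2 m}
    (hι : ∀ i, ι i = if (i : ℕ) < 2 ^ m - 1 then α ^ (i : ℕ) else 0) :
    CEbar m e α = goldCode e ι := by
  ext c
  rw [SetLike.mem_coe, mem_goldCode_iff, ← and_assoc]
  refine and_congr_left' ((mem_CE_iff hm hem hα _).trans ?_)
  rw [sum_univ_castLE_sub_one (by positivity) fun i => c i • ι i,
    sum_univ_castLE_sub_one (by positivity) fun i => c i • ι i ^ (1 + 2 ^ e)]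
  simp [hι]

lemma CEbarSub_eq_goldCode (hm : m ≠ 0) (hem : ¬ m ∣ e) (hα : orderOf α = 2 ^ m - 1)
    {ι : Fin (2 ^ m) ≃ GaloisField 2 m}
    (hι : ∀ i, ι i = if (i : ℕ) < 2 ^ m - 1 then α ^ (i : ℕ) else 0) :
    CEbarSub m e α = goldCode e ι :=
  SetLike.coe_injective (CEbar_eq_goldCode hm hem hα hι)

end CyclicCode

lemma pos_of_not_dvd_of_two_mul_eq_sub_gcd {m e h : ℕ} (hm : 0 < m) (hem : ¬ m ∣ e)
    (hh : 2 * h = m - Nat.gcd m e) : 0 < h := by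
  rw [Nat.pos_iff_ne_zero]
  rintro rfl
  exact hem (Nat.gcd_eq_left_iff_dvd.1 ((Nat.gcd_le_left e hm).antisymm (by omega)))

theorem dual_code_parameters_case_a_general
    (m e h : ℕ) (hm : 4 ≤ m) (hem : ¬ m ∣ e)
    (hodd : Odd (m / Nat.gcd m e)) (hh : 2 * h = m - Nat.gcd m e)
    (α : GaloisField 2 m) (hα : orderOf α = 2 ^ m - 1) :
    Module.finrank (ZMod 2) ↥(dualCode (CEbar m e α)) = 2 * m + 1 ∧
    IsLeast {i | ∃ y ∈ dualCode (CEbar m e α), y ≠ 0 ∧ hammingNorm y = i}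
      (2 ^ (m - 1) - 2 ^ (m - 1 - h)) ∧
    {y : Fin (2 ^ m) → ZMod 2 |
      y ∈ dualCode (CEbar m e α) ∧ hammingNorm y = 0}.ncard = 1 ∧
    {y : Fin (2 ^ m) → ZMod 2 | y ∈ dualCode (CEbar m e α) ∧
      hammingNorm y = 2 ^ (m - 1) - 2 ^ (m - 1 - h)}.ncard =
        (2 ^ m - 1) * 2 ^ (2 * h) ∧
    {y : Fin (2 ^ m) → ZMod 2 | y ∈ dualCode (CEbar m e α) ∧
      hammingNorm y = 2 ^ (m - 1)}.ncard =
        (2 ^ m - 1) * (2 ^ (m + 1) - 2 ^ (2 * h + 1) + 2) ∧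
    {y : Fin (2 ^ m) → ZMod 2 | y ∈ dualCode (CEbar m e α) ∧
      hammingNorm y = 2 ^ (m - 1) + 2 ^ (m - 1 - h)}.ncard =
        (2 ^ m - 1) * 2 ^ (2 * h) ∧
    {y : Fin (2 ^ m) → ZMod 2 | y ∈ dualCode (CEbar m e α) ∧
      hammingNorm y = 2 ^ m}.ncard = 1 ∧
    (∀ y ∈ dualCode (CEbar m e α), hammingNorm y ∈
      ({0, 2 ^ (m - 1) - 2 ^ (m - 1 - h), 2 ^ (m - 1),
        2 ^ (m - 1) + 2 ^ (m - 1 - h), 2 ^ m} : Set ℕ)) ∧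
    Module.finrank (ZMod 2) ↥(CEbarSub m e α) = 2 ^ m - 1 - 2 * m ∧
    (1 < Nat.gcd e m →
      IsLeast {i | ∃ c ∈ CEbar m e α, c ≠ 0 ∧ hammingNorm c = i} 4) ∧
    (Nat.gcd e m = 1 →
      IsLeast {i | ∃ c ∈ CEbar m e α, c ≠ 0 ∧ hammingNorm c = i} 6) := by
  have := Fintype.ofFinite (GaloisField 2 m)
  have hcard : Fintype.card (GaloisField 2 m) = 2 ^ m :=
    Fintype.card_eq_nat_card.trans (GaloisField.card 2 m (by omega))
  have h0 : 0 < h := pos_of_not_dvd_of_two_mul_eq_sub_gcd (by omega) hem hh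
  have hhm : h < m := by omega
  obtain ⟨ι, hι⟩ := exists_equiv_eq_pow_or_zero hcard hα
  have hf : ∀ a : GaloisField 2 m, a ≠ 0 → IsPlateaued (goldFunction e a) (2 ^ (m - h)) :=
    fun _ => isPlateaued_goldFunction hcard hodd hh
  rw [CEbarSub_eq_goldCode (by omega) hem hα hι, CEbar_eq_goldCode (by omega) hem hα hι,
    dualCode_goldCode hcard h0 hodd hh]
  refine ⟨finrank_traceCode_goldFunction hcard h0 hodd hh,
    isLeast_hammingNorm_traceCode hcard h0 hhm hf, ncard_hammingNorm_eq_zero _, ?_, ?_, ?_, ?_,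
    fun y => hammingNorm_mem_of_mem_traceCode hcard hhm hf, finrank_goldCode hcard h0 hodd hh,
    isLeast_hammingNorm_goldCode_four ι hcard, isLeast_hammingNorm_goldCode_six ι hcard hm⟩
  · rw [ncard_traceCode_hammingNorm_eq_of_eq_or_eq_neg hcard h0 hhm.le hf
      (Or.inl (two_pow_sub_two_mul_low_weight hhm)), hcard]
  · rw [ncard_traceCode_hammingNorm_eq_two_pow_sub_one hcard h0 hhm.le hf, hcard,
      pow_succ, pow_succ, ← Nat.sub_mul]
    ring
  · rw [ncard_traceCode_hammingNorm_eq_of_eq_or_eq_neg hcard h0 hhm.le hf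
      (Or.inr (two_pow_sub_two_mul_high_weight hhm)), hcard]
  · simpa only [Fintype.card_fin, SetLike.mem_coe] using
      ncard_hammingNorm_eq_card (one_mem_traceCode (goldFunction e) ι)

/-- Let `m ≥ 4`, `1 ≤ e ≤ ⌊m/2⌋` with `m/gcd(m,e)` odd, and
`h = (m − gcd(m,e))/2`. Then `C̄_E^⊥` has dimension `2m + 1`, minimum nonzero weight
`2^{m−1} − 2^{m−1−h}`, and the stated weight distribution, with no codewords of other
weights; moreover `C̄_E` has dimension `2^m − 1 − 2m` and minimum nonzero weight `4`
if `gcd(e,m) > 1` and `6` if `gcd(e,m) = 1`. -/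
theorem dual_code_parameters_case_a
    (m e h : ℕ) (hm : 4 ≤ m) (he1 : 1 ≤ e) (heM : 2 * e ≤ m)
    (hodd : Odd (m / Nat.gcd m e)) (hh : 2 * h = m - Nat.gcd m e)
    (α : GaloisField 2 m) (hα : orderOf α = 2 ^ m - 1) :
    Module.finrank (ZMod 2) ↥(dualCode (CEbar m e α)) = 2 * m + 1 ∧
    IsLeast {i | ∃ y ∈ dualCode (CEbar m e α), y ≠ 0 ∧ hammingNorm y = i}
      (2 ^ (m - 1) - 2 ^ (m - 1 - h)) ∧
    {y : Fin (2 ^ m) → ZMod 2 |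
      y ∈ dualCode (CEbar m e α) ∧ hammingNorm y = 0}.ncard = 1 ∧
    {y : Fin (2 ^ m) → ZMod 2 | y ∈ dualCode (CEbar m e α) ∧
      hammingNorm y = 2 ^ (m - 1) - 2 ^ (m - 1 - h)}.ncard =
        (2 ^ m - 1) * 2 ^ (2 * h) ∧
    {y : Fin (2 ^ m) → ZMod 2 | y ∈ dualCode (CEbar m e α) ∧
      hammingNorm y = 2 ^ (m - 1)}.ncard =
        (2 ^ m - 1) * (2 ^ (m + 1) - 2 ^ (2 * h + 1) + 2) ∧
    {y : Fin (2 ^ m) → ZMod 2 | y ∈ dualCode (CEbar m e α) ∧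
      hammingNorm y = 2 ^ (m - 1) + 2 ^ (m - 1 - h)}.ncard =
        (2 ^ m - 1) * 2 ^ (2 * h) ∧
    {y : Fin (2 ^ m) → ZMod 2 | y ∈ dualCode (CEbar m e α) ∧
      hammingNorm y = 2 ^ m}.ncard = 1 ∧
    (∀ y ∈ dualCode (CEbar m e α), hammingNorm y ∈
      ({0, 2 ^ (m - 1) - 2 ^ (m - 1 - h), 2 ^ (m - 1),
        2 ^ (m - 1) + 2 ^ (m - 1 - h), 2 ^ m} : Set ℕ)) ∧
    Module.finrank (ZMod 2) ↥(CEbarSub m e α) = 2 ^ m - 1 - 2 * m ∧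
    (1 < Nat.gcd e m →
      IsLeast {i | ∃ c ∈ CEbar m e α, c ≠ 0 ∧ hammingNorm c = i} 4) ∧
    (Nat.gcd e m = 1 →
      IsLeast {i | ∃ c ∈ CEbar m e α, c ≠ 0 ∧ hammingNorm c = i} 6) :=
  dual_code_parameters_case_a_general m e h hm
    (fun hdvd => by have := Nat.le_of_dvd he1 hdvd; omega) hodd hh α hα
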